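/- Let β ≥ 0 be real and let m ≥ n ≥ 0 and t ≥ s ≥ 0 be integers. Then ∫_ℂ |z|² · Z^{(β)}_{m,n}(z, conj(z)) · conj(Z^{(β)}_{t,s}(z, conj(z))) dν(z) = 0 if m−n ≠ t−s, and if m−n = t−s it equals [(−1)^{n+s} (−β−m)_n (−β−t)_s Γ(m−n+β+2)/(n!·s!)] · Σ_{j=0}^{n} Σ_{k=0}^{s} [(β+m−n+2)_{j+k} (−n)_j (−s)_k / ((β+m−n+1)_j (β+m−n+1)_k · j!·k!)]. -/

import Mathlib

open MeasureTheory Finset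

/-- Pochhammer symbol `(a)_j = a (a+1) ⋯ (a+j-1)`. -/
noncomputable def poch (a : ℝ) (j : ℕ) : ℝ := ∏ i ∈ Finset.range j, (a + i)

/-- The generalized 2D Laguerre polynomial `Z^{(β)}_{m,n}(z,w)` (for `m ≥ n`). -/
noncomputable def Zc (β : ℝ) (m n : ℕ) (z w : ℂ) : ℂ :=
  ∑ k ∈ Finset.range (n + 1),
    (((-1 : ℝ) ^ (n - k) * poch (β + 1) m /
        (k.factorial * (n - k).factorial * poch (β + 1) (m - k)) : ℝ) : ℂ) *
      z ^ (m - k) * w ^ (n - k)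

/-- The density of the measure. -/
noncomputable def wgt (β : ℝ) (z : ℂ) : ℝ :=
  Real.pi⁻¹ * ‖z‖ ^ (2 * β) * Real.exp (-(‖z‖ ^ 2))

lemma wgt_nonneg (β : ℝ) (z : ℂ) : 0 ≤ wgt β z := by
  unfold wgt
  have := Real.pi_pos
  positivity

lemma wgt_cont (β : ℝ) (hβ : 0 ≤ β) : Continuous (wgt β) := by
  unfold wgt
  have : Continuous (fun z : ℂ => ‖z‖ ^ (2 * β)) :=
    continuous_norm.rpow_const (fun _ => Or.inr (by positivity))
  fun_prop

lemma wgt_mul_pow (β : ℝ) (hβ : 0 ≤ β) (N : ℕ) (z : ℂ) :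
    wgt β z * ‖z‖ ^ N
      = Real.pi⁻¹ * (‖z‖ ^ (2 * β + N) * Real.exp (-‖z‖ ^ (2 : ℝ))) := by
  unfold wgt
  rw [Real.rpow_add_of_nonneg (norm_nonneg _) (by positivity) (by positivity),
    Real.rpow_natCast, Real.rpow_two]
  ring

lemma integral_wgt_pow (β : ℝ) (hβ : 0 ≤ β) (N : ℕ) :
    ∫ z : ℂ, wgt β z * ‖z‖ ^ N = Real.Gamma ((2 * β + N + 2) / 2) := by
  simp_rw [wgt_mul_pow β hβ N]
  have hN : (0 : ℝ) ≤ N := Nat.cast_nonneg _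
  rw [integral_const_mul, Complex.integral_rpow_mul_exp_neg_rpow (by norm_num) (by linarith)]
  have := Real.pi_ne_zero
  field_simp

lemma integrable_wgt_pow (β : ℝ) (hβ : 0 ≤ β) (N : ℕ) :
    Integrable (fun z : ℂ => wgt β z * ‖z‖ ^ N) := by
  by_contra h
  have h1 := integral_wgt_pow β hβ N
  rw [integral_undef h] at h1
  exact absurd h1 (Real.Gamma_pos_of_pos (by positivity)).ne

lemma mom_int (β : ℝ) (hβ : 0 ≤ β) (a b : ℕ) :
    Integrable (fun z : ℂ => (wgt β z : ℂ) * (z ^ a * (starRingEnd ℂ z) ^ b)) := by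
  refine (integrable_wgt_pow β hβ (a + b)).mono' ?_ ?_
  · have := wgt_cont β hβ
    have h2 : Continuous (fun z : ℂ => starRingEnd ℂ z) := Complex.continuous_conj
    exact Continuous.aestronglyMeasurable (by fun_prop)
  · refine Filter.Eventually.of_forall (fun z => ?_)
    simp [abs_of_nonneg (wgt_nonneg β z), pow_add]

lemma mom_eq (β : ℝ) (hβ : 0 ≤ β) (a : ℕ) :
    ∫ z : ℂ, (wgt β z : ℂ) * (z ^ a * (starRingEnd ℂ z) ^ a) = (Real.Gamma (β + a + 1) : ℂ) := by
  have h : ∀ z : ℂ, (wgt β z : ℂ) * (z ^ a * (starRingEnd ℂ z) ^ a)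
      = ((wgt β z * ‖z‖ ^ (2 * a) : ℝ) : ℂ) := by
    intro z
    rw [← mul_pow, Complex.mul_conj, Complex.normSq_eq_norm_sq, pow_mul]
    push_cast
    rfl
  simp_rw [h]
  rw [integral_complex_ofReal, integral_wgt_pow β hβ]
  congr 2
  push_cast
  ring

lemma mom_ne_aux (β : ℝ) (a b : ℕ) (c : Circle) (hc : (c : ℂ) ^ a * (starRingEnd ℂ c) ^ b = -1) :
    ∫ z : ℂ, (wgt β z : ℂ) * (z ^ a * (starRingEnd ℂ z) ^ b) = 0 := by
  have h1 := (rotation c).measurePreserving.integral_comp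
    (rotation c).toHomeomorph.measurableEmbedding
    (fun z : ℂ => (wgt β z : ℂ) * (z ^ a * (starRingEnd ℂ z) ^ b))
  have h2 : ∀ z : ℂ, (wgt β (rotation c z) : ℂ) *
      ((rotation c z) ^ a * (starRingEnd ℂ (rotation c z)) ^ b)
      = - ((wgt β z : ℂ) * (z ^ a * (starRingEnd ℂ z) ^ b)) := by
    intro z
    have h3 : wgt β (rotation c z) = wgt β z := by
      unfold wgt
      rw [LinearIsometryEquiv.norm_map]
    rw [h3, rotation_apply, map_mul, mul_pow, mul_pow]
    linear_combination (wgt β z : ℂ) * (z ^ a * (starRingEnd ℂ z) ^ b) * hc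
  simp_rw [h2] at h1
  rw [integral_neg] at h1
  exact self_eq_neg.mp h1.symm

lemma mom_ne (β : ℝ) (a b : ℕ) (hab : a ≠ b) :
    ∫ z : ℂ, (wgt β z : ℂ) * (z ^ a * (starRingEnd ℂ z) ^ b) = 0 := by
  apply mom_ne_aux β a b (Circle.exp (Real.pi / ((a : ℝ) - b)))
  have hab' : (a : ℂ) - b ≠ 0 := sub_ne_zero.mpr (by exact_mod_cast hab)
  rw [Circle.coe_exp, ← Complex.exp_conj, ← Complex.exp_nat_mul, ← Complex.exp_nat_mul,
    ← Complex.exp_add, ← Complex.exp_pi_mul_I]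
  congr 1
  simp only [map_mul, Complex.conj_ofReal, Complex.conj_I]
  push_cast
  field_simp
  ring

lemma poch_pos (a : ℝ) (ha : 0 < a) (j : ℕ) : 0 < poch a j :=
  Finset.prod_pos (fun i _ => by positivity)

lemma poch_succ (a : ℝ) (j : ℕ) : poch a (j + 1) = poch a j * (a + j) :=
  Finset.prod_range_succ _ _

lemma poch_add (a : ℝ) (i j : ℕ) : poch a (i + j) = poch a i * poch (a + i) j := by
  unfold poch
  rw [Finset.prod_range_add]
  congr 1
  refine Finset.prod_congr rfl (fun x _ => ?_)
  push_cast
  ring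

lemma poch_neg_nat (n j : ℕ) (h : j ≤ n) :
    poch (-(n : ℝ)) j * (n - j).factorial = (-1) ^ j * n.factorial := by
  induction j with
  | zero => simp [poch]
  | succ j ih =>
    have ih := ih (by omega)
    obtain ⟨r, rfl⟩ := Nat.exists_eq_add_of_le h
    have e1 : j + 1 + r - j = r + 1 := by omega
    have e2 : j + 1 + r - (j + 1) = r := by omega
    rw [e1, Nat.factorial_succ] at ih
    rw [e2, poch_succ, pow_succ]
    push_cast at ih ⊢
    linear_combination -ih

lemma poch_reflect (a : ℝ) (n : ℕ) : (-1) ^ n * poch (-a - n) n = poch (a + 1) n := by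
  unfold poch
  rw [← Finset.prod_range_reflect (fun i : ℕ => a + 1 + (i : ℝ))]
  have h : (-1 : ℝ) ^ n = ∏ _i ∈ Finset.range n, (-1 : ℝ) := by simp
  rw [h, ← Finset.prod_mul_distrib]
  refine Finset.prod_congr rfl (fun x hx => ?_)
  have hx := Finset.mem_range.mp hx
  rw [Nat.sub_sub, Nat.cast_sub (by omega)]
  push_cast
  ring

lemma poch_Gamma (a : ℝ) (ha : 0 < a) (j : ℕ) :
    Real.Gamma (a + j) = Real.Gamma a * poch a j := by
  induction j with
  | zero => simp [poch]
  | succ j ih =>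
    rw [poch_succ, ← mul_assoc, ← ih, Nat.cast_succ, ← add_assoc,
      Real.Gamma_add_one (by positivity), mul_comm]

/-- Normalised coefficients. -/
noncomputable def cf (β : ℝ) (d n j : ℕ) : ℝ :=
  poch (β + d + 1) n / n.factorial *
    (poch (-(n : ℝ)) j / (poch (β + d + 1) j * j.factorial))

lemma Zc_eq (β : ℝ) (hβ : 0 ≤ β) (d n : ℕ) (z w : ℂ) :
    Zc β (d + n) n z w
      = ∑ j ∈ Finset.range (n + 1), (cf β d n j : ℂ) * (z ^ (d + j) * w ^ j) := by
  unfold Zc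
  rw [← Finset.sum_range_reflect]
  refine Finset.sum_congr rfl (fun j hj => ?_)
  have hj : j ≤ n := Nat.lt_succ_iff.mp (Finset.mem_range.mp hj)
  have e1 : n + 1 - 1 - j = n - j := by omega
  have e2 : n - (n - j) = j := by omega
  have e3 : d + n - (n - j) = d + j := by omega
  rw [e1, e2, e3, mul_assoc]
  congr 2
  unfold cf
  rw [poch_add, poch_add]
  have p1 := (poch_pos (β + 1) (by positivity) d).ne'
  have p2 := (poch_pos (β + d + 1) (by positivity) j).ne'
  have p3 : β + 1 + (d : ℝ) = β + d + 1 := by ring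
  have p4 := poch_neg_nat n j hj
  have f1 : ((n - j).factorial : ℝ) ≠ 0 := by exact_mod_cast Nat.factorial_ne_zero _
  have f2 : (n.factorial : ℝ) ≠ 0 := by exact_mod_cast Nat.factorial_ne_zero _
  have f3 : (j.factorial : ℝ) ≠ 0 := by exact_mod_cast Nat.factorial_ne_zero _
  rw [p3]
  field_simp
  linear_combination -poch (β + d + 1) n * p4

lemma main_int (β : ℝ) (hβ : 0 ≤ β) (d n e s : ℕ) :
    ∫ z : ℂ, ((Complex.normSq z : ℝ) : ℂ) * Zc β (d + n) n z (starRingEnd ℂ z) *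
          starRingEnd ℂ (Zc β (e + s) s z (starRingEnd ℂ z))
        ∂(volume.withDensity (fun z => ENNReal.ofReal (wgt β z)))
      = ∑ j ∈ Finset.range (n + 1), ∑ k ∈ Finset.range (s + 1),
        ((cf β d n j * cf β e s k : ℝ) : ℂ) *
          ∫ z : ℂ, (wgt β z : ℂ) *
            (z ^ (d + j + k + 1) * (starRingEnd ℂ z) ^ (e + j + k + 1)) := by
  rw [integral_withDensity_eq_integral_toReal_smul
    (f := fun z => ENNReal.ofReal (wgt β z))
    (ENNReal.measurable_ofReal.comp (wgt_cont β hβ).measurable)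
    (Filter.Eventually.of_forall (fun _ => ENNReal.ofReal_lt_top))]
  simp_rw [← integral_const_mul]
  have hi : ∀ j k : ℕ, Integrable (fun z : ℂ => ((cf β d n j * cf β e s k : ℝ) : ℂ) *
      ((wgt β z : ℂ) * (z ^ (d + j + k + 1) * (starRingEnd ℂ z) ^ (e + j + k + 1)))) :=
    fun j k => (mom_int β hβ _ _).const_mul _
  have h1 : ∀ j ∈ Finset.range (n + 1), (∑ k ∈ Finset.range (s + 1),
      ∫ z : ℂ, ((cf β d n j * cf β e s k : ℝ) : ℂ) *
      ((wgt β z : ℂ) * (z ^ (d + j + k + 1) * (starRingEnd ℂ z) ^ (e + j + k + 1))))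
      = ∫ z : ℂ, ∑ k ∈ Finset.range (s + 1), ((cf β d n j * cf β e s k : ℝ) : ℂ) *
      ((wgt β z : ℂ) * (z ^ (d + j + k + 1) * (starRingEnd ℂ z) ^ (e + j + k + 1))) :=
    fun j _ => (integral_finsetSum _ (fun k _ => hi j k)).symm
  rw [Finset.sum_congr rfl h1,
    ← integral_finsetSum _ (fun j _ => integrable_finsetSum _ (fun k _ => hi j k))]
  congr 1
  funext z
  rw [ENNReal.toReal_ofReal (wgt_nonneg β z), Complex.real_smul, Zc_eq β hβ, Zc_eq β hβ, map_sum,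
    mul_assoc, Finset.sum_mul_sum, Finset.mul_sum, Finset.mul_sum]
  refine Finset.sum_congr rfl (fun j _ => ?_)
  rw [Finset.mul_sum, Finset.mul_sum]
  refine Finset.sum_congr rfl (fun k _ => ?_)
  simp only [map_mul, map_pow, Complex.conj_ofReal, Complex.conj_conj]
  rw [← Complex.mul_conj]
  push_cast
  ring

/-- Integral formula for `∫ |z|² Z^{(β)}_{m,n}(z,z̄) conj(Z^{(β)}_{t,s}(z,z̄)) dν(z)`,
with `dν(z) = π⁻¹ |z|^{2β} e^{−|z|²} dA(z)`. -/
theorem laguerre2D_integral_absSq (β : ℝ) (hβ : 0 ≤ β) (m n t s : ℕ)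
    (hmn : n ≤ m) (hts : s ≤ t)
    (ν : Measure ℂ)
    (hν : ν = volume.withDensity (fun z =>
      ENNReal.ofReal (Real.pi⁻¹ * ‖z‖ ^ (2 * β) * Real.exp (-(‖z‖ ^ 2))))) :
    (((m : ℤ) - n ≠ (t : ℤ) - s) →
      ∫ z : ℂ, ((Complex.normSq z : ℝ) : ℂ) * Zc β m n z (starRingEnd ℂ z) *
          starRingEnd ℂ (Zc β t s z (starRingEnd ℂ z)) ∂ν = 0) ∧
    (((m : ℤ) - n = (t : ℤ) - s) →
      ∫ z : ℂ, ((Complex.normSq z : ℝ) : ℂ) * Zc β m n z (starRingEnd ℂ z) *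
          starRingEnd ℂ (Zc β t s z (starRingEnd ℂ z)) ∂ν
        = ((((-1 : ℝ) ^ (n + s) * poch (-β - m) n * poch (-β - t) s *
              Real.Gamma ((m : ℝ) - n + β + 2) / (n.factorial * s.factorial)) *
            ∑ j ∈ Finset.range (n + 1), ∑ k ∈ Finset.range (s + 1),
              poch (β + (m : ℝ) - n + 2) (j + k) * poch (-(n : ℝ)) j * poch (-(s : ℝ)) k /
                (poch (β + (m : ℝ) - n + 1) j * poch (β + (m : ℝ) - n + 1) k *
                  j.factorial * k.factorial) : ℝ) : ℂ)) := by
  have hν' : ν = volume.withDensity (fun z => ENNReal.ofReal (wgt β z)) := hν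
  obtain ⟨d, rfl⟩ := Nat.exists_eq_add_of_le' hmn
  obtain ⟨e, rfl⟩ := Nat.exists_eq_add_of_le' hts
  clear hν
  subst hν'
  rw [main_int β hβ]
  constructor
  · intro hne
    refine Finset.sum_eq_zero (fun j _ => Finset.sum_eq_zero (fun k _ => ?_))
    rw [mom_ne β _ _ (by push_cast at hne; omega), mul_zero]
  · intro heq
    have hde : d = e := by push_cast at heq; omega
    subst hde
    have q1 : β + ((d + n : ℕ) : ℝ) - n = β + d := by push_cast; ring
    have q2 : ((d + n : ℕ) : ℝ) - n + β + 2 = β + d + 2 := by push_cast; ring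
    have q3 : -β - ((d + n : ℕ) : ℝ) = -(β + d) - n := by push_cast; ring
    have q4 : -β - ((d + s : ℕ) : ℝ) = -(β + d) - s := by push_cast; ring
    rw [q1, q2, q3, q4, Finset.mul_sum, Complex.ofReal_sum]
    refine Finset.sum_congr rfl (fun j _ => ?_)
    rw [Finset.mul_sum, Complex.ofReal_sum]
    refine Finset.sum_congr rfl (fun k _ => ?_)
    rw [mom_eq β hβ, ← Complex.ofReal_mul]
    congr 1
    have g : β + ((d + j + k + 1 : ℕ) : ℝ) + 1 = (β + d + 2) + ((j + k : ℕ) : ℝ) := by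
      push_cast; ring
    rw [g, poch_Gamma _ (by positivity)]
    unfold cf
    rw [← poch_reflect (β + d) n, ← poch_reflect (β + d) s, pow_add]
    have p1 := (poch_pos (β + d + 1) (by positivity) j).ne'
    have p2 := (poch_pos (β + d + 1) (by positivity) k).ne'
    field_simp
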